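/- For all reals L₁ > 2ε > 0, -Li₂(-cosh²(L₁/4)/sinh²(ε/2)) = L₁²/8 - L₁·log(2·sinh(ε/2)) + π²/6 + 2·log²(2·sinh(ε/2)) - L₁·∑_{k≥1} ((-1)^k/k)·e^{-kL₁/2} + ∑_{k≥1} (-1)^k·U_k·e^{-kL₁/2}, where U_k = (4/k)·log(2·sinh(ε/2)) + (4/k)·∑_{j=1}^{k-1} 1/j + ∑_{j=1}^{k} ((2·sinh(ε/2))^{2j}/j²)·C(k+j-1, 2j-1), and both series on the right converge. -/

import Mathlib

/-!
Write `a = 2 sinh (ε / 2)` and `q = exp (-L₁ / 2)`. The argument of the dilogarithm is `-x` with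
`x = (1 + q)² / (q a²)`, so the inversion formula (`dilogNeg_inversion`)
`-Li₂(-x) = π² / 6 + log² x / 2 + Li₂(-1 / x)` reduces the claim to two expansions in powers of `q`.

* Since `log x = 2 log (1 + q) + L₁ / 2 - 2 log a`, expanding the square gives the elementary terms,
  the terms `L₁ log (1 + q)` and `-4 log a log (1 + q)`, and `2 log² (1 + q)`, whose series has
  harmonic-number coefficients (`hasSum_log_sq`).
* `Li₂(-1 / x) = ∑ⱼ (-1)ʲ a²ʲ / j² · qʲ (1 + q)⁻²ʲ`, and the binomial series for `(1 + q)⁻²ʲ` gives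
  the last sum in `U_k` (`hasSum_choose_rearranged`). The rearrangement is legitimate when
  `a² q < (1 - q)²`, that is `sinh (ε / 2) < sinh (L₁ / 4)`, which is `2 ε < L₁`.
-/

/-- The real dilogarithm via its integral representation. -/
noncomputable def Li2 (x : ℝ) : ℝ :=
  -∫ t in (0:ℝ)..x, Real.log (1 - t) / t

/-- The coefficient `U_k` in the expansion of the Klein bottle volume. -/
noncomputable def Ucoef (ε : ℝ) (k : ℕ) : ℝ :=
  (4 / (k : ℝ)) * Real.log (2 * Real.sinh (ε / 2)) +
    (4 / (k : ℝ)) * ∑ j ∈ Finset.Icc 1 (k - 1), (1 / (j : ℝ)) +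
    ∑ j ∈ Finset.Icc 1 k,
      ((2 * Real.sinh (ε / 2)) ^ (2 * j) / (j : ℝ) ^ 2) *
        (Nat.choose (k + j - 1) (2 * j - 1) : ℝ)

/-- The function `x ↦ -Li₂(-x)`, written for `x > 0` with a positive integrand. -/
noncomputable def dilogNeg (x : ℝ) : ℝ := ∫ t in (0:ℝ)..x, Real.log (1 + t) / t

/-- Transport of a sum along termwise equality and equality of the value. -/
lemma hasSum_of_eq {f g : ℕ → ℝ} {a b : ℝ} (h : HasSum f a) (hf : ∀ n, g n = f n)
    (hb : b = a) : HasSum g b := by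
  rw [funext hf, hb]
  exact h

lemma log_div_integrable (x : ℝ) (hx : 0 < x) :
    IntervalIntegrable (fun t : ℝ => Real.log (1 + t) / t) MeasureTheory.volume 0 x := by
  rw [intervalIntegrable_iff, Set.uIoc_of_le hx.le]
  refine MeasureTheory.IntegrableOn.of_bound (by simp) ?_ 1 ?_
  · exact (by fun_prop : Measurable fun t : ℝ => Real.log (1 + t) / t).aestronglyMeasurable
  · filter_upwards [MeasureTheory.ae_restrict_mem measurableSet_Ioc] with t ht
    have h0 : 0 < t := ht.1
    have h1 : 0 ≤ Real.log (1 + t) := Real.log_nonneg (by linarith)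
    have h2 := Real.log_le_sub_one_of_pos (show 0 < 1 + t by linarith)
    rw [Real.norm_of_nonneg (by positivity), div_le_one h0]
    linarith

lemma hasDerivAt_dilogNeg (x : ℝ) (hx : 0 < x) :
    HasDerivAt dilogNeg (Real.log (1 + x) / x) x := by
  refine intervalIntegral.integral_hasDerivAt_right (log_div_integrable x hx) ?_ ?_
  · exact (by fun_prop : Measurable fun t : ℝ => Real.log (1 + t) / t).stronglyMeasurable.stronglyMeasurableAtFilter
  · have : 1 + x ≠ 0 := by positivity
    have : x ≠ 0 := hx.ne'
    fun_prop (disch := assumption)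

/-- The power series of `-Li₂(-y)`, including the endpoint `y = 1`: termwise integration of
`log (1 + t) / t` is justified there by the convergence of `∑ 1 / n²`. -/
lemma hasSum_dilogNeg (y : ℝ) (hy : 0 < y) (hy1 : y ≤ 1) :
    HasSum (fun n : ℕ => (-1 : ℝ) ^ n * y ^ (n + 1) / ((n : ℝ) + 1) ^ 2) (dilogNeg y) := by
  have hnorm (n : ℕ) : ∫ t in Set.Ioc 0 y, ‖(-1 : ℝ) ^ n * t ^ n / ((n : ℝ) + 1)‖
      = y ^ (n + 1) / ((n : ℝ) + 1) ^ 2 := by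
    rw [MeasureTheory.setIntegral_congr_fun (g := fun t : ℝ => t ^ n / ((n : ℝ) + 1))
      measurableSet_Ioc, ← intervalIntegral.integral_of_le hy.le, intervalIntegral.integral_div,
      integral_pow]
    · field_simp
      simp
    · intro t ht
      have : 0 < t := ht.1
      simp only [norm_div, norm_mul, norm_pow, norm_neg, norm_one, one_pow, one_mul]
      rw [Real.norm_of_nonneg this.le, Real.norm_of_nonneg (by positivity)]
  have hint (n : ℕ) : ∫ t in Set.Ioc 0 y, (-1 : ℝ) ^ n * t ^ n / ((n : ℝ) + 1)
      = (-1 : ℝ) ^ n * y ^ (n + 1) / ((n : ℝ) + 1) ^ 2 := by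
    rw [← intervalIntegral.integral_of_le hy.le, intervalIntegral.integral_div,
      intervalIntegral.integral_const_mul, integral_pow]
    field_simp
    simp
  have key := MeasureTheory.hasSum_integral_of_summable_integral_norm
    (μ := MeasureTheory.volume.restrict (Set.Ioc 0 y))
    (F := fun (n : ℕ) (t : ℝ) => (-1 : ℝ) ^ n * t ^ n / ((n : ℝ) + 1)) ?_ ?_
  · simp only [hint] at key
    refine hasSum_of_eq key (fun _ => rfl) ?_
    rw [dilogNeg, intervalIntegral.integral_of_le hy.le, MeasureTheory.integral_Ioc_eq_integral_Ioo, MeasureTheory.integral_Ioc_eq_integral_Ioo]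
    refine MeasureTheory.setIntegral_congr_fun measurableSet_Ioo ?_
    intro t ht
    have h0 : 0 < t := ht.1
    have h1 : t < 1 := ht.2.trans_le hy1
    have h := (Real.hasSum_pow_div_log_of_abs_lt_one (x := -t)
      (by rw [abs_neg, abs_of_pos h0]; exact h1)).mul_left (-1 / t)
    rw [sub_neg_eq_add] at h
    have h' : HasSum (fun n : ℕ => (-1 : ℝ) ^ n * t ^ n / ((n : ℝ) + 1))
        (Real.log (1 + t) / t) := by
      refine hasSum_of_eq h (fun n => ?_) ?_
      · rw [neg_pow]
        field_simp
        ring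
      · field_simp
    exact h'.tsum_eq.symm
  · intro n
    exact ((by fun_prop : Continuous fun t : ℝ => (-1 : ℝ) ^ n * t ^ n / ((n : ℝ) + 1)).integrableOn_Icc
      (a := 0) (b := y)).mono_set Set.Ioc_subset_Icc_self
  · simp only [hnorm]
    have hs : Summable fun n : ℕ => 1 / ((n : ℝ) + 1) ^ 2 := by
      have := (summable_nat_add_iff 1).2 hasSum_zeta_two.summable
      simpa using this
    refine hs.of_nonneg_of_le (fun n => by positivity) fun n => ?_
    gcongr
    exact pow_le_one₀ hy.le hy1

lemma dilogNeg_one : dilogNeg 1 = Real.pi ^ 2 / 12 := by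
  have h := hasSum_dilogNeg 1 one_pos le_rfl
  have hz := hasSum_zeta_two
  have he : HasSum (fun n : ℕ => 1 / ((2 * n : ℕ) : ℝ) ^ 2) (Real.pi ^ 2 / 24) := by
    refine hasSum_of_eq (hz.mul_left (1 / 4)) (fun n => ?_) ?_
    · push_cast
      rw [mul_pow]
      rw [one_div_mul_one_div]
      norm_num
    · ring
  have hz' : HasSum (fun n : ℕ => 1 / ((n : ℝ) + 1) ^ 2) (Real.pi ^ 2 / 6) := by
    have := (hasSum_nat_add_iff (f := fun n : ℕ => 1 / (n : ℝ) ^ 2) 1 (g := Real.pi ^ 2 / 6)).2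
      (by simpa using hz)
    simpa using this
  -- the odd-indexed terms of the alternating series carry the even squares
  have ho : HasSum (fun n : ℕ => 1 / ((2 * n + 1 : ℕ) + 1 : ℝ) ^ 2) (Real.pi ^ 2 / 24) := by
    refine hasSum_of_eq (hz'.mul_left (1 / 4)) (fun n => ?_) ?_
    · push_cast
      rw [show (2 * (n : ℝ) + 1 + 1) = 2 * (n + 1) by ring, mul_pow, one_div_mul_one_div]
      norm_num
    · ring
  have hodd : HasSum (fun n : ℕ => if Odd n then 1 / ((n : ℝ) + 1) ^ 2 else 0)
      (0 + Real.pi ^ 2 / 24) := by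
    refine HasSum.even_add_odd ?_ ?_
    · simp only [Nat.not_odd_iff_even.2 (even_two_mul _), if_false]
      exact hasSum_zero
    · simpa using ho
  have := hz'.sub (hodd.mul_left 2)
  have h2 := h.unique (hasSum_of_eq this (fun n => by
    rcases Nat.even_or_odd n with hn | hn
    · simp [hn.neg_one_pow, Nat.not_odd_iff_even.2 hn]
    · simp [hn.neg_one_pow, hn]
      ring) rfl)
  rw [h2]
  ring

/-- The inversion formula: the derivative of the left side vanishes on `(0, ∞)`, and the constant
is found at `x = 1`. -/
lemma dilogNeg_inversion (x : ℝ) (hx : 0 < x) :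
    dilogNeg x + dilogNeg x⁻¹ - Real.log x ^ 2 / 2 = Real.pi ^ 2 / 6 := by
  have hd : ∀ z ∈ Set.Ioi (0 : ℝ), HasDerivAt
      (fun x => dilogNeg x + dilogNeg x⁻¹ - Real.log x ^ 2 / 2) 0 z := by
    intro z hz
    have hz : 0 < z := hz
    have h1 := hasDerivAt_dilogNeg z hz
    have h2 := (hasDerivAt_dilogNeg z⁻¹ (by positivity)).comp z (hasDerivAt_inv hz.ne')
    have h3 := ((Real.hasDerivAt_log hz.ne').pow 2).div_const 2
    refine ((h1.add h2).sub h3).congr_deriv ?_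
    have : Real.log (1 + z⁻¹) = Real.log (1 + z) - Real.log z := by
      rw [← Real.log_div (by positivity) hz.ne']
      congr 1
      field_simp
      ring
    rw [this]
    field_simp
    ring
  have := isOpen_Ioi.is_const_of_deriv_eq_zero isPreconnected_Ioi
    (fun z hz => (hd z hz).differentiableAt.differentiableWithinAt)
    (fun z hz => (hd z hz).deriv) (Set.mem_Ioi.2 hx) (Set.mem_Ioi.2 (one_pos (α := ℝ)))
  simp only [inv_one, dilogNeg_one, Real.log_one] at this
  rw [this]
  ring

lemma sum_Icc_one (f : ℕ → ℝ) (n : ℕ) :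
    ∑ j ∈ Finset.Icc 1 n, f j = ∑ i ∈ Finset.range n, f (i + 1) := by
  induction n with
  | zero => simp
  | succ n ih => rw [Finset.sum_Icc_succ_top (by omega), ih, Finset.sum_range_succ]

lemma hasSum_log (q : ℝ) (hq : 0 < q) (hq1 : q < 1) :
    HasSum (fun n : ℕ => (-1 : ℝ) ^ (n + 1) / ((n : ℝ) + 1) * q ^ (n + 1))
      (-Real.log (1 + q)) := by
  have h := Real.hasSum_pow_div_log_of_abs_lt_one (x := -q)
      (by rw [abs_neg, abs_of_pos hq]; exact hq1)
  rw [sub_neg_eq_add] at h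
  refine hasSum_of_eq h (fun n => ?_) rfl
  rw [neg_pow]
  ring

/-- The Cauchy square of the logarithm series; the harmonic numbers come from the partial fractions
`1 / ((i + 1) (j + 1)) = (1 / (i + 1) + 1 / (j + 1)) / (i + j + 2)`. -/
lemma hasSum_log_sq (q : ℝ) (hq : 0 < q) (hq1 : q < 1) :
    HasSum (fun n : ℕ => (-1 : ℝ) ^ (n + 1) * (2 / ((n : ℝ) + 1) *
      ∑ i ∈ Finset.range n, 1 / ((i : ℝ) + 1)) * q ^ (n + 1)) (Real.log (1 + q) ^ 2) := by
  have h := hasSum_log q hq hq1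
  have hn : Summable fun n : ℕ => ‖(-1 : ℝ) ^ (n + 1) / ((n : ℝ) + 1) * q ^ (n + 1)‖ :=
    h.summable.norm
  have hs := (summable_norm_sum_mul_antidiagonal_of_summable_norm hn hn).of_norm.hasSum
  rw [← tsum_mul_tsum_eq_tsum_sum_antidiagonal_of_summable_norm hn hn, h.tsum_eq] at hs
  rw [← hasSum_nat_add_iff' 1]
  refine hasSum_of_eq hs (fun n => ?_) ?_
  · have hterm : ∀ p ∈ Finset.HasAntidiagonal.antidiagonal n,
        (-1 : ℝ) ^ (p.1 + 1) / ((p.1 : ℝ) + 1) * q ^ (p.1 + 1) *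
          ((-1 : ℝ) ^ (p.2 + 1) / ((p.2 : ℝ) + 1) * q ^ (p.2 + 1)) =
        (-1) ^ (n + 2) * q ^ (n + 2) / ((n : ℝ) + 2) *
          (1 / ((p.1 : ℝ) + 1) + 1 / ((p.2 : ℝ) + 1)) := by
      intro p hp
      rw [Finset.HasAntidiagonal.mem_antidiagonal] at hp
      subst hp
      have h1 : (p.1 : ℝ) + 1 ≠ 0 := by positivity
      have h2 : (p.2 : ℝ) + 1 ≠ 0 := by positivity
      have h3 : (p.1 : ℝ) + p.2 + 2 ≠ 0 := by positivity
      push_cast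
      field_simp
      ring
    rw [Finset.sum_congr rfl hterm, ← Finset.mul_sum, Finset.sum_add_distrib,
      ← Finset.Nat.sum_antidiagonal_swap (f := fun p : ℕ × ℕ => 1 / ((p.2 : ℝ) + 1))]
    simp only [Prod.snd_swap]
    rw [Finset.Nat.sum_antidiagonal_eq_sum_range_succ_mk]
    push_cast
    rw [show (n : ℝ) + 1 + 1 = n + 2 by ring]
    simp only [Nat.succ_eq_add_one]
    ring
  · simp
    ring

/-- Expansion in powers of `q` of `Li₂(-A q / (1 + q)²)`: expand each `(1 + q)^(-2j)` by the binomial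
series and collect powers of `q`. The double series of absolute values sums to
`∑ wʲ / j²` with `w = A q / (1 - q)²`, whence the hypothesis `h`. -/
lemma hasSum_choose_rearranged (A q : ℝ) (hA : 0 < A) (hq : 0 < q) (hq1 : q < 1)
    (h : A * q < (1 - q) ^ 2) :
    HasSum (fun n : ℕ => (-1 : ℝ) ^ (n + 1) * (∑ i ∈ Finset.range (n + 1),
      A ^ (i + 1) / ((i : ℝ) + 1) ^ 2 * ((n + 1 + i).choose (2 * i + 1) : ℝ)) * q ^ (n + 1))
      (-dilogNeg (A * q / (1 + q) ^ 2)) := by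
  -- row `i` of the double series is the `j = i + 1` term; column `m` indexes the binomial series
  set F : ℕ × ℕ → ℝ := fun p => (-1 : ℝ) ^ (p.1 + 1) * (A * q) ^ (p.1 + 1) / ((p.1 : ℝ) + 1) ^ 2 *
    (((p.2 + (2 * p.1 + 1)).choose (2 * p.1 + 1) : ℝ) * (-q) ^ p.2) with hF
  have hrow (i : ℕ) : HasSum (fun m => F (i, m))
      (-((-1 : ℝ) ^ i * (A * q / (1 + q) ^ 2) ^ (i + 1) / ((i : ℝ) + 1) ^ 2)) := by
    have := (hasSum_choose_mul_geometric_of_norm_lt_one (2 * i + 1) (r := -q)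
      (by rwa [norm_neg, Real.norm_of_nonneg hq.le])).mul_left
      ((-1 : ℝ) ^ (i + 1) * (A * q) ^ (i + 1) / ((i : ℝ) + 1) ^ 2)
    refine hasSum_of_eq this (fun _ => rfl) ?_
    rw [sub_neg_eq_add, div_pow, ← pow_mul, show 2 * (i + 1) = 2 * i + 1 + 1 by ring]
    ring
  have hrown (i : ℕ) : HasSum (fun m => ‖F (i, m)‖)
      ((A * q / (1 - q) ^ 2) ^ (i + 1) / ((i : ℝ) + 1) ^ 2) := by
    have := (hasSum_choose_mul_geometric_of_norm_lt_one (2 * i + 1) (r := q)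
      (by rwa [Real.norm_of_nonneg hq.le])).mul_left
      ((A * q) ^ (i + 1) / ((i : ℝ) + 1) ^ 2)
    refine hasSum_of_eq this (fun m => ?_) ?_
    · simp only [hF, norm_mul, norm_div, norm_pow, norm_neg, norm_one, one_pow, one_mul,
        Real.norm_natCast, Real.norm_of_nonneg hq.le, Real.norm_of_nonneg hA.le]
      rw [Real.norm_of_nonneg (by positivity : (0 : ℝ) ≤ (i : ℝ) + 1)]
    · rw [div_pow, ← pow_mul, show 2 * (i + 1) = 2 * i + 1 + 1 by ring]
      ring
  have h1q : 0 < 1 - q := by linarith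
  have hw : A * q / (1 - q) ^ 2 < 1 := by rw [div_lt_one (by positivity)]; exact h
  have hsum : Summable F := by
    refine Summable.of_norm ((summable_prod_of_nonneg fun _ => norm_nonneg _).2
      ⟨fun i => (hrown i).summable, ?_⟩)
    simp only [(hrown _).tsum_eq]
    refine ((summable_nat_add_iff 1).2 (summable_geometric_of_lt_one (by positivity) hw)
      ).of_nonneg_of_le (fun n => by positivity) fun n => ?_
    refine div_le_self (by positivity) (one_le_pow₀ ?_)
    linarith [(Nat.cast_nonneg n : (0 : ℝ) ≤ n)]
  have hy1 : A * q / (1 + q) ^ 2 ≤ 1 := by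
    rw [div_le_one (by positivity)]
    nlinarith
  have htot : HasSum F (-dilogNeg (A * q / (1 + q) ^ 2)) := by
    have e := hsum.hasSum.prod_fiberwise hrow
    rw [← e.unique (hasSum_dilogNeg _ (by positivity) hy1).neg]
    exact hsum.hasSum
  have hanti := ((Finset.HasAntidiagonal.sigmaAntidiagonalEquivProd (A := ℕ)).hasSum_iff.2 htot).sigma
    fun n => hasSum_fintype _
  refine hasSum_of_eq hanti (fun n => ?_) rfl
  have := Finset.sum_coe_sort (Finset.HasAntidiagonal.antidiagonal n) F
  simp only [Function.comp, Finset.HasAntidiagonal.sigmaAntidiagonalEquivProd_apply]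
  rw [this, Finset.Nat.sum_antidiagonal_eq_sum_range_succ_mk, Finset.mul_sum, Finset.sum_mul]
  refine Finset.sum_congr rfl fun i hi => ?_
  have hi' : i ≤ n := by simpa [Nat.lt_succ_iff] using hi
  obtain ⟨m, rfl⟩ := Nat.exists_eq_add_of_le hi'
  simp only [hF, Nat.add_sub_cancel_left]
  rw [show i + m + 1 + i = m + (2 * i + 1) by ring, neg_pow q m]
  ring

lemma hasSum_from_one {f g : ℕ → ℝ} {a : ℝ} (h : HasSum g a) (hfg : ∀ n, f (n + 1) = g n) :
    HasSum (fun k : ℕ => if k = 0 then 0 else f k) a := by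
  have := (hasSum_nat_add_iff (f := fun k : ℕ => if k = 0 then 0 else f k) 1 (g := a)).1
    (hasSum_of_eq h (fun n => by simp [hfg]) rfl)
  simpa using this

lemma Li2_neg (x : ℝ) : Li2 (-x) = -dilogNeg x := by
  have h := intervalIntegral.integral_comp_neg (a := 0) (b := x)
    (fun t : ℝ => Real.log (1 - t) / t)
  rw [neg_zero] at h
  rw [Li2, ← intervalIntegral.integral_symm, ← h, dilogNeg, ← intervalIntegral.integral_neg]
  congr 1
  ext t
  rw [sub_neg_eq_add, div_neg]

/-- The series with coefficients `U_k`: its three summands are the series of `log (1 + q)`, of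
`log² (1 + q)`, and the rearranged dilogarithm. -/
lemma hasSum_Ucoef (ε q : ℝ) (hε : 0 < ε) (hq : 0 < q) (hq1 : q < 1)
    (h : (2 * Real.sinh (ε / 2)) ^ 2 * q < (1 - q) ^ 2) :
    HasSum (fun n : ℕ => (-1 : ℝ) ^ (n + 1) * Ucoef ε (n + 1) * q ^ (n + 1))
      (-4 * Real.log (2 * Real.sinh (ε / 2)) * Real.log (1 + q) + 2 * Real.log (1 + q) ^ 2 -
        dilogNeg ((2 * Real.sinh (ε / 2)) ^ 2 * q / (1 + q) ^ 2)) := by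
  have hs : 0 < Real.sinh (ε / 2) := Real.sinh_pos_iff.2 (by positivity)
  have h1 := (hasSum_log q hq hq1).mul_left (4 * Real.log (2 * Real.sinh (ε / 2)))
  have h2 := (hasSum_log_sq q hq hq1).mul_left 2
  have h3 := hasSum_choose_rearranged _ q (by positivity) hq hq1 h
  refine hasSum_of_eq ((h1.add h2).add h3) (fun n => ?_) (by ring)
  rw [Ucoef, sum_Icc_one, sum_Icc_one]
  simp only [Nat.add_sub_cancel, pow_mul, Nat.cast_add, Nat.cast_one]
  have he : ∀ i, (n + 1 + (i + 1) - 1).choose (2 * (i + 1) - 1)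
      = (n + 1 + i).choose (2 * i + 1) := fun i => by congr 1
  simp only [he]
  ring

theorem klein_bottle_volume_expansion (L₁ ε : ℝ) (hε : 0 < ε) (hL : 2 * ε < L₁) :
    ∃ S₁ S₂ : ℝ,
      HasSum (fun k : ℕ => if k = 0 then 0 else
        ((-1 : ℝ) ^ k / (k : ℝ)) * Real.exp (-(k : ℝ) * L₁ / 2)) S₁ ∧
      HasSum (fun k : ℕ => if k = 0 then 0 else
        (-1 : ℝ) ^ k * Ucoef ε k * Real.exp (-(k : ℝ) * L₁ / 2)) S₂ ∧
      -Li2 (-(Real.cosh (L₁ / 4) ^ 2 / Real.sinh (ε / 2) ^ 2)) =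
        L₁ ^ 2 / 8 - L₁ * Real.log (2 * Real.sinh (ε / 2)) + Real.pi ^ 2 / 6 +
          2 * (Real.log (2 * Real.sinh (ε / 2))) ^ 2 - L₁ * S₁ + S₂ := by
  set q := Real.exp (-(L₁ / 2)) with hqdef
  set s := Real.exp (-(L₁ / 4)) with hsdef
  have hs0 : 0 < s := Real.exp_pos _
  have hqs : q = s ^ 2 := by
    rw [hqdef, hsdef, ← Real.exp_nat_mul]
    congr 1
    push_cast
    ring
  have hexp : Real.exp (L₁ / 4) = s⁻¹ := by rw [hsdef, Real.exp_neg, inv_inv]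
  have hq : 0 < q := Real.exp_pos _
  have hq1 : q < 1 := by rw [hqdef, Real.exp_lt_one_iff]; linarith
  have hqk (k : ℕ) : Real.exp (-(k : ℝ) * L₁ / 2) = q ^ k := by
    rw [hqdef, ← Real.exp_nat_mul]
    congr 1
    ring
  have hsinh : 0 < Real.sinh (ε / 2) := Real.sinh_pos_iff.2 (by positivity)
  have hcond : (2 * Real.sinh (ε / 2)) ^ 2 * q < (1 - q) ^ 2 := by
    have hlt : Real.sinh (ε / 2) < Real.sinh (L₁ / 4) := Real.sinh_lt_sinh.2 (by linarith)
    have heq : (1 - q) ^ 2 = (2 * Real.sinh (L₁ / 4)) ^ 2 * q := by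
      rw [Real.sinh_eq, hexp, ← hsdef, hqs]
      field_simp
    rw [heq]
    gcongr
  set a := 2 * Real.sinh (ε / 2) with ha
  have ha0 : 0 < a := by positivity
  have harg : Real.cosh (L₁ / 4) ^ 2 / Real.sinh (ε / 2) ^ 2 = (a ^ 2 * q / (1 + q) ^ 2)⁻¹ := by
    rw [Real.cosh_eq, hexp, ← hsdef, hqs, ha]
    field_simp
  have hlog : Real.log (a ^ 2 * q / (1 + q) ^ 2) = 2 * Real.log a - L₁ / 2 - 2 * Real.log (1 + q) := by
    rw [Real.log_div (by positivity) (by positivity), Real.log_mul (by positivity) hq.ne',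
      Real.log_pow, Real.log_pow, hqdef, Real.log_exp]
    push_cast
    ring
  refine ⟨_, _, hasSum_from_one (hasSum_log q hq hq1) fun n => ?_,
    hasSum_from_one (hasSum_Ucoef ε q hε hq hq1 hcond) fun n => ?_, ?_⟩
  · rw [hqk]
    push_cast
    ring
  · rw [hqk]
  · have hinv := dilogNeg_inversion (a ^ 2 * q / (1 + q) ^ 2) (by positivity)
    rw [hlog] at hinv
    rw [harg, Li2_neg]
    linear_combination hinv
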